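/- Let R be a commutative ring. The following conditions are equivalent: (a) every flat Mittag-Leffler R-module is admissibly Ind-projective; (b) every countably generated projective R-module is isomorphic to a direct sum of finitely generated R-modules; (c) the class of admissibly Ind-projective R-modules is closed under direct summands, i.e. for all R-modules M and N, if the external direct sum M ⊕ N is admissibly Ind-projective then so is M. (Lemma B.1(3) of the appendix by Štovíček and Trlifaj.) -/

import Mathlib

universe u

open TensorProduct DirectSum

/-- The canonical map `M ⊗[R] (∏ i, Q i) →ₗ[R] ∏ i, (M ⊗[R] Q i)`,
determined by `m ⊗ (q_i)_i ↦ (m ⊗ q_i)_i`. -/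
noncomputable def tensorPiMap (R : Type u) [CommRing R] (M : Type u) [AddCommGroup M]
    [Module R M] {ι : Type u} (Q : ι → Type u) [∀ i, AddCommGroup (Q i)]
    [∀ i, Module R (Q i)] :
    (M ⊗[R] (∀ i, Q i)) →ₗ[R] ∀ i, M ⊗[R] Q i :=
  LinearMap.pi fun i => LinearMap.lTensor M (LinearMap.proj i)

/-- An `R`-module `M` is Mittag-Leffler if for every family `(Q i)` of `R`-modules the
canonical map `M ⊗[R] (∏ i, Q i) → ∏ i, (M ⊗[R] Q i)` is injective. -/
def IsMittagLeffler (R : Type u) [CommRing R] (M : Type u) [AddCommGroup M]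
    [Module R M] : Prop :=
  ∀ (ι : Type u) (Q : ι → Type u) [∀ i, AddCommGroup (Q i)] [∀ i, Module R (Q i)],
    Function.Injective (tensorPiMap R M Q)

/-- An `R`-module is flat Mittag-Leffler if it is flat and Mittag-Leffler. -/
def IsFlatMittagLeffler (R : Type u) [CommRing R] (M : Type u) [AddCommGroup M]
    [Module R M] : Prop :=
  Module.Flat R M ∧ IsMittagLeffler R M


/-- A presentation of `M` as an admissible Ind-object of the category of finitely
generated projective `R`-modules: a directed poset `I` and a monotone family of
submodules `P i ⊆ M` with union `M`, each finitely generated projective, such that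
each inclusion `P i ⊆ P j` (for `i ≤ j`) admits an `R`-linear retraction. -/
structure AdmissibleIndPresentation (R : Type u) [Ring R] (M : Type u) [AddCommGroup M]
    [Module R M] : Type (u + 1) where
  I : Type u
  [ord : PartialOrder I]
  directed : IsDirected I (· ≤ ·)
  P : I → Submodule R M
  mono : Monotone P
  covers : ∀ x : M, ∃ i, x ∈ P i
  fg : ∀ i, (P i).FG
  proj : ∀ i, Module.Projective R (P i)
  splits : ∀ i j, (h : i ≤ j) →
    ∃ r : (P j) →ₗ[R] (P i), ∀ v : P i, r (Submodule.inclusion (mono h) v) = v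

/-- `M` is admissibly Ind-projective if it admits a presentation as an admissible
Ind-object of finitely generated projective modules. -/
def IsAdmissiblyIndProjective (R : Type u) [Ring R] (M : Type u) [AddCommGroup M]
    [Module R M] : Prop :=
  Nonempty (AdmissibleIndPresentation R M)

/-!
Let `M` be flat Mittag-Leffler. Every map `x` from a finite free module `F` to `M` factors as
`F → G → M`, with `G` finite free, so that every factorization of `x` through a finite free module
yields a factorization of `F → G` with the same first map. Iterating, every finitely generated
submodule of `M` lies in the image `C` of the colimit of a tower of such factorizations, and `C` is
projective: lifts along the tower can be corrected one step at a time to become compatible.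

If each such `C` is a direct sum of finitely generated modules, the finite partial sums are direct
summands of `C`, and the tower shows that they split off every finitely generated projective
submodule of `M` containing them. They therefore form an admissible presentation of `M`.
Conversely, a countably generated module with an admissible presentation has one indexed by `ℕ`,
and successive complements decompose it into finitely generated summands. Closure under direct
summands enters because flat Mittag-Leffler modules are closed under them, while every projective
module is a summand of a free module, which has an admissible presentation.
-/

section MittagLeffler

variable {R : Type u} [CommRing R] {M N : Type u} [AddCommGroup M] [AddCommGroup N]
  [Module R M] [Module R N]

theorem tensorPiMap_rTensor (f : M →ₗ[R] N) {ι : Type u} (Q : ι → Type u)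
    [∀ i, AddCommGroup (Q i)] [∀ i, Module R (Q i)] (t : M ⊗[R] (∀ i, Q i)) (i : ι) :
    tensorPiMap R N Q (f.rTensor _ t) i = f.rTensor (Q i) (tensorPiMap R M Q t i) :=
  (LinearMap.congr_fun (LinearMap.lTensor_comp_rTensor _ _ _) t).trans
    (LinearMap.congr_fun (LinearMap.rTensor_comp_lTensor _ _ _) t).symm

theorem isMittagLeffler_iff_forall_eq_zero :
    IsMittagLeffler R M ↔ ∀ (ι : Type u) (Q : ι → Type u) [∀ i, AddCommGroup (Q i)]
      [∀ i, Module R (Q i)] (t : M ⊗[R] (∀ i, Q i)), tensorPiMap R M Q t = 0 → t = 0 :=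
  forall_congr' fun _ => forall_congr' fun Q => forall_congr' fun _ => forall_congr' fun _ =>
    injective_iff_map_eq_zero (tensorPiMap R M Q)

theorem rTensor_injective_of_comp_eq_id (X : Type*) [AddCommGroup X] [Module R X]
    {i : M →ₗ[R] N} {r : N →ₗ[R] M} (hri : r ∘ₗ i = LinearMap.id) :
    Function.Injective (i.rTensor X) :=
  LinearMap.injective_of_comp_eq_id _ (r.rTensor X) <| by
    rw [← LinearMap.rTensor_comp, hri, LinearMap.rTensor_id]

theorem IsMittagLeffler.of_comp_eq_id (hN : IsMittagLeffler R N) (i : M →ₗ[R] N) (r : N →ₗ[R] M)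
    (hri : r ∘ₗ i = LinearMap.id) : IsMittagLeffler R M := by
  intro ι Q _ _
  refine fun s t hst => rTensor_injective_of_comp_eq_id _ hri (hN ι Q (funext fun j => ?_))
  rw [tensorPiMap_rTensor, tensorPiMap_rTensor, hst]

theorem IsMittagLeffler.finsupp (κ : Type u) : IsMittagLeffler R (κ →₀ R) := by
  classical
  intro ι Q _ _ s t hst
  apply (TensorProduct.finsuppScalarLeft R (∀ i, Q i) κ).injective
  have apply_apply (t : (κ →₀ R) ⊗[R] (∀ i, Q i)) (k : κ) (i : ι) :
      TensorProduct.finsuppScalarLeft R _ κ t k i =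
        TensorProduct.finsuppScalarLeft R (Q i) κ (tensorPiMap R _ Q t i) k := by
    induction t with
    | zero => simp
    | add s t hs ht => simp [hs, ht]
    | tmul f q => simp [tensorPiMap]
  ext k i
  rw [apply_apply, apply_apply, hst]

theorem IsMittagLeffler.of_projective [Module.Projective R M] : IsMittagLeffler R M :=
  have ⟨s, hs⟩ := (Module.projective_def' (R := R) (P := M)).mp inferInstance
  (IsMittagLeffler.finsupp M).of_comp_eq_id s _ hs

theorem IsFlatMittagLeffler.of_comp_eq_id (hN : IsFlatMittagLeffler R N) (i : M →ₗ[R] N)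
    (r : N →ₗ[R] M) (hri : r ∘ₗ i = LinearMap.id) : IsFlatMittagLeffler R M :=
  have := hN.1
  ⟨Module.Flat.of_retract i r hri, hN.2.of_comp_eq_id i r hri⟩

end MittagLeffler

namespace AdmissibleIndPresentation

attribute [instance] ord directed

section Ring

variable {R : Type u} [Ring R] {M : Type u} [AddCommGroup M] [Module R M]
  (D : AdmissibleIndPresentation R M)

theorem exists_ge_of_fg (i₀ : D.I) {N : Submodule R M} (hN : N.FG) :
    ∃ i, i₀ ≤ i ∧ N ≤ D.P i := by
  induction N, hN using Submodule.fg_induction with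
  | singleton x =>
    obtain ⟨j, hj⟩ := D.covers x
    obtain ⟨i, hi₀, hji⟩ := exists_ge_ge i₀ j
    exact ⟨i, hi₀, (Submodule.span_singleton_le_iff_mem _ _).mpr (D.mono hji hj)⟩
  | sup N₁ N₂ _ _ ih₁ ih₂ =>
    obtain ⟨i₁, hi₁, hN₁⟩ := ih₁
    obtain ⟨i₂, -, hN₂⟩ := ih₂
    obtain ⟨i, h₁, h₂⟩ := exists_ge_ge i₁ i₂
    exact ⟨i, hi₁.trans h₁, sup_le (hN₁.trans (D.mono h₁)) (hN₂.trans (D.mono h₂))⟩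

theorem exists_le_of_fg {N : Submodule R M} (hN : N.FG) : ∃ i, N ≤ D.P i :=
  have ⟨i₀, _⟩ := D.covers 0
  (D.exists_ge_of_fg i₀ hN).imp fun _ hi => hi.2

end Ring

variable {R : Type u} [CommRing R] {M : Type u} [AddCommGroup M] [Module R M]

theorem exists_rTensor_subtype_eq (D : AdmissibleIndPresentation R M) {X : Type*} [AddCommGroup X]
    [Module R X] (t : M ⊗[R] X) : ∃ i s, (D.P i).subtype.rTensor X s = t := by
  obtain ⟨N, hN, s, rfl⟩ := Submodule.exists_fg_le_eq_rTensor_subtype t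
  obtain ⟨i, hi⟩ := D.exists_le_of_fg hN
  refine ⟨i, (Submodule.inclusion hi).rTensor X s, ?_⟩
  rw [← LinearMap.rTensor_comp_apply, Submodule.subtype_comp_inclusion]

theorem rTensor_subtype_injective (D : AdmissibleIndPresentation R M) (X : Type*) [AddCommGroup X]
    [Module R X] (i : D.I) :
    Function.Injective ((D.P i).subtype.rTensor X) := by
  intro s t hst
  obtain ⟨N, hN, hle, hst⟩ := (D.fg i).exists_rTensor_fg_inclusion_eq hst
  obtain ⟨j, hij, hNj⟩ := D.exists_ge_of_fg i hN
  obtain ⟨r, hr⟩ := D.splits i j hij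
  exact rTensor_injective_of_comp_eq_id X (r := r ∘ₗ Submodule.inclusion hNj) (LinearMap.ext hr) hst

theorem flat (D : AdmissibleIndPresentation R M) : Module.Flat R M := by
  refine Module.Flat.iff_lTensor_preserves_injective_linearMap.mpr fun X Y _ _ _ _ f hf => ?_
  refine (injective_iff_map_eq_zero _).mpr fun t ht => ?_
  obtain ⟨i, s, rfl⟩ := D.exists_rTensor_subtype_eq t
  have := D.proj i
  rw [← LinearMap.comp_apply, LinearMap.lTensor_comp_rTensor, ← LinearMap.rTensor_comp_lTensor,
    LinearMap.comp_apply] at ht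
  rw [(map_eq_zero_iff _ (Module.Flat.lTensor_preserves_injective_linearMap f hf)).mp
    ((map_eq_zero_iff _ (D.rTensor_subtype_injective Y i)).mp ht), map_zero]

theorem isMittagLeffler (D : AdmissibleIndPresentation R M) : IsMittagLeffler R M := by
  refine isMittagLeffler_iff_forall_eq_zero.mpr fun ι Q _ _ t ht => ?_
  obtain ⟨i, s, rfl⟩ := D.exists_rTensor_subtype_eq t
  have := D.proj i
  suffices tensorPiMap R (D.P i) Q s = 0 by
    rw [isMittagLeffler_iff_forall_eq_zero.mp .of_projective ι Q s this, map_zero]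
  refine funext fun j => (map_eq_zero_iff _ (D.rTensor_subtype_injective (Q j) i)).mp ?_
  rw [← tensorPiMap_rTensor, ht, Pi.zero_apply]

end AdmissibleIndPresentation

theorem IsAdmissiblyIndProjective.isFlatMittagLeffler {R : Type u} [CommRing R] {M : Type u}
    [AddCommGroup M] [Module R M] : IsAdmissiblyIndProjective R M → IsFlatMittagLeffler R M :=
  fun ⟨D⟩ => ⟨D.flat, D.isMittagLeffler⟩

section Domination

variable {R : Type*} [CommRing R] {M F G H P : Type*} [AddCommGroup M] [AddCommGroup F]
  [AddCommGroup G] [AddCommGroup H] [AddCommGroup P] [Module R M] [Module R F] [Module R G]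
  [Module R H] [Module R P]

/-- Domination in the sense of Raynaud and Gruson: whenever `x` factors through a finite free
module, `a` factors through the same map. For `F` finite free and `M` flat this says that
`ker (x ⊗ Q) ≤ ker (a ⊗ Q)` for every module `Q`. -/
def Dominates (a : F →ₗ[R] G) (x : F →ₗ[R] M) : Prop :=
  ∀ ⦃k : ℕ⦄ (b : F →ₗ[R] Fin k →₀ R) (z : (Fin k →₀ R) →ₗ[R] M), z ∘ₗ b = x →
    ∃ c : (Fin k →₀ R) →ₗ[R] G, c ∘ₗ b = a

namespace Dominates

variable {x : F →ₗ[R] M} {a : F →ₗ[R] G}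

theorem comp_left (h : Dominates a x) (g : G →ₗ[R] H) : Dominates (g ∘ₗ a) x :=
  fun _ b z hz =>
    have ⟨c, hc⟩ := h b z hz
    ⟨g ∘ₗ c, by rw [LinearMap.comp_assoc, hc]⟩

theorem comp_right [Module.Flat R M] [Module.Free R F] [Module.Finite R F] [Module.Finite R P]
    (h : Dominates a x) (s : P →ₗ[R] F) : Dominates (a ∘ₗ s) (x ∘ₗ s) := by
  intro k b z hz
  obtain ⟨l, d, w, hw, hd⟩ := Module.Flat.exists_factorization_of_comp_eq_zero_of_free
    (f := s.prod (-b)) (x := x.coprod z) (by ext v; simp [← hz])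
  obtain ⟨c, hc⟩ := h (d ∘ₗ LinearMap.inl R F (Fin k →₀ R)) w (by
    rw [← LinearMap.comp_assoc, ← hw, LinearMap.coprod_inl])
  refine ⟨c ∘ₗ d ∘ₗ LinearMap.inr R F (Fin k →₀ R), LinearMap.ext fun v => ?_⟩
  have hdv : d (0, b v) = d (s v, 0) := by
    have h0 : d (s v, -b v) = 0 := LinearMap.congr_fun hd v
    rw [← sub_eq_zero, ← neg_eq_zero, neg_sub, ← map_sub, Prod.mk_sub_mk, sub_zero, zero_sub, h0]
  simp [← hc, hdv]

theorem ker_le_ker [Module.Flat R M] [Module.Free R F] [Module.Finite R F] (h : Dominates a x) :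
    LinearMap.ker x ≤ LinearMap.ker a := by
  intro v hv
  obtain ⟨k, b, z, hz, hb⟩ := Module.Flat.exists_factorization_of_apply_eq_zero_of_free
    (LinearMap.mem_ker.mp hv)
  obtain ⟨c, rfl⟩ := h b z hz.symm
  rw [LinearMap.mem_ker, LinearMap.comp_apply, hb, map_zero]

theorem exists_comp_eq (h : Dominates a x) [Module.Finite R P] [Module.Projective R P]
    (b : F →ₗ[R] P) (z : P →ₗ[R] M) (hz : z ∘ₗ b = x) : ∃ c : P →ₗ[R] G, c ∘ₗ b = a := by
  obtain ⟨n, f, g, -, -, hfg⟩ := Module.Finite.exists_comp_eq_id_of_projective R P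
  let e := Finsupp.linearEquivFunOnFinite R R (Fin n)
  obtain ⟨c, hc⟩ := h (e.symm.toLinearMap ∘ₗ g ∘ₗ b) (z ∘ₗ f ∘ₗ e.toLinearMap) <|
    LinearMap.ext fun v => by simp [← hz, show f (g (b v)) = b v from LinearMap.congr_fun hfg _]
  exact ⟨c ∘ₗ e.symm ∘ₗ g, hc⟩

end Dominates

end Domination

section TensorDual

variable (R : Type*) [CommRing R] (M F : Type*) [AddCommGroup M] [AddCommGroup F]
  [Module R M] [Module R F] [Module.Finite R F] [Module.Projective R F]

/-- Linear maps out of a finitely generated projective module `F`, as tensors with coefficients in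
the dual of `F`. -/
noncomputable def tensorDualEquivHom : M ⊗[R] Module.Dual R F ≃ₗ[R] F →ₗ[R] M :=
  TensorProduct.comm R M (Module.Dual R F) ≪≫ₗ dualTensorHomEquiv R F M

variable {R M F}

@[simp]
theorem tensorDualEquivHom_tmul_apply (m : M) (f : Module.Dual R F) (v : F) :
    tensorDualEquivHom R M F (m ⊗ₜ f) v = f v • m := rfl

theorem tensorDualEquivHom_lTensor_dualMap {G : Type*} [AddCommGroup G] [Module R G]
    [Module.Finite R G] [Module.Projective R G] (b : F →ₗ[R] G) (s : M ⊗[R] Module.Dual R G) :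
    tensorDualEquivHom R M F (b.dualMap.lTensor M s) = tensorDualEquivHom R M G s ∘ₗ b := by
  induction s with
  | zero => simp
  | add s t hs ht => simp only [map_add, hs, ht, LinearMap.add_comp]
  | tmul m f => rfl

end TensorDual

namespace IsMittagLeffler

variable {R : Type u} [CommRing R] {M F : Type u} [AddCommGroup M] [Module R M]
  [AddCommGroup F] [Module R F]

theorem exists_isLeast_mem_range_lTensor_subtype [Module.Flat R M] (h : IsMittagLeffler R M)
    (t : M ⊗[R] F) :
    ∃ K, IsLeast {Q : Submodule R F | t ∈ LinearMap.range (Q.subtype.lTensor M)} K := by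
  let 𝒬 := {Q : Submodule R F // t ∈ LinearMap.range (Q.subtype.lTensor M)}
  let g : F →ₗ[R] ∀ Q : 𝒬, F ⧸ Q.1 := LinearMap.pi fun Q => Q.1.mkQ
  have hgt : g.lTensor M t = 0 := by
    refine isMittagLeffler_iff_forall_eq_zero.mp h 𝒬 _ _ (funext fun ⟨Q, hQ⟩ => ?_)
    calc tensorPiMap R M (fun Q : 𝒬 => F ⧸ Q.1) (g.lTensor M t) ⟨Q, hQ⟩
      _ = Q.mkQ.lTensor M t := (LinearMap.lTensor_comp_apply M _ g t).symm
      _ = 0 := (lTensor_exact M (LinearMap.exact_subtype_mkQ Q) Q.mkQ_surjective t).mpr hQ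
  exact ⟨LinearMap.ker g,
    (Module.Flat.lTensor_exact M (LinearMap.exact_subtype_ker_map g) t).mp hgt,
    fun Q hQ v hv => (Submodule.Quotient.mk_eq_zero Q).mp (congrFun hv ⟨Q, hQ⟩)⟩

theorem exists_dominates [Module.Flat R M] [Module.Projective R F] [Module.Finite R F]
    (h : IsMittagLeffler R M) (x : F →ₗ[R] M) :
    ∃ (m : ℕ) (a : F →ₗ[R] Fin m →₀ R) (y : (Fin m →₀ R) →ₗ[R] M),
      y ∘ₗ a = x ∧ Dominates a x := by
  obtain ⟨t, rfl⟩ := (tensorDualEquivHom R M F).surjective x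
  obtain ⟨K, ⟨w, rfl⟩, hK⟩ := h.exists_isLeast_mem_range_lTensor_subtype t
  obtain ⟨m, y, κ, rfl⟩ := TensorProduct.exists_sum_tmul_eq w
  let e := (Finsupp.linearEquivFunOnFinite R R (Fin m)).symm.toLinearMap
  refine ⟨m, e ∘ₗ LinearMap.pi fun j => (κ j : Module.Dual R F), Finsupp.linearCombination R y,
    ?_, fun k b z hz => ?_⟩
  · ext v
    simp [e, Finsupp.linearCombination_apply, Finsupp.sum_fintype]
  · have κ_mem (j) : (κ j : Module.Dual R F) ∈ LinearMap.range b.dualMap := by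
      obtain ⟨s, rfl⟩ := (tensorDualEquivHom R M (Fin k →₀ R)).surjective z
      refine hK ⟨b.dualMap.rangeRestrict.lTensor M s, ?_⟩ (κ j).2
      rw [← LinearMap.lTensor_comp_apply, LinearMap.subtype_comp_codRestrict]
      exact (tensorDualEquivHom R M F).injective ((tensorDualEquivHom_lTensor_dualMap b s).trans hz)
    choose g hg using κ_mem
    refine ⟨e ∘ₗ LinearMap.pi g, LinearMap.ext fun v => ?_⟩
    ext j
    exact LinearMap.congr_fun (hg j) v

end IsMittagLeffler

theorem exists_linearMap_comp_eq {R ι : Type*} [Ring R] [Nonempty ι] {M N : Type*}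
    [AddCommGroup M] [AddCommGroup N] [Module R M] [Module R N] {F : ι → Type*}
    [∀ i, AddCommGroup (F i)] [∀ i, Module R (F i)] (y : ∀ i, F i →ₗ[R] M) (σ : ∀ i, F i →ₗ[R] N)
    (hdir : Directed (· ≤ ·) fun i => LinearMap.range ((y i).prod (σ i)))
    (hker : ∀ i, LinearMap.ker (y i) ≤ LinearMap.ker (σ i))
    (hcover : ∀ x, ∃ i, x ∈ LinearMap.range (y i)) :
    ∃ θ : M →ₗ[R] N, ∀ i, θ ∘ₗ y i = σ i := by
  let Γ := ⨆ i, LinearMap.range ((y i).prod (σ i))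
  have mem_Γ (i) (v : F i) : (y i v, σ i v) ∈ Γ :=
    (le_iSup (fun i => LinearMap.range ((y i).prod (σ i))) i) ⟨v, rfl⟩
  have fst_injective : Function.Injective (LinearMap.fst R M N ∘ₗ Γ.subtype) := by
    refine (injective_iff_map_eq_zero _).mpr fun ⟨p, hp⟩ hp₀ => ?_
    obtain ⟨i, v, rfl⟩ := (Submodule.mem_iSup_of_directed _ hdir).mp hp
    exact Subtype.ext (Prod.ext hp₀ (hker i hp₀))
  have fst_surjective : Function.Surjective (LinearMap.fst R M N ∘ₗ Γ.subtype) := fun x =>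
    have ⟨i, v, hv⟩ := hcover x
    ⟨⟨_, mem_Γ i v⟩, hv⟩
  obtain ⟨θ, hθ⟩ := Submodule.exists_eq_graph ⟨fst_injective, fst_surjective⟩
  exact ⟨θ, fun i => LinearMap.ext fun v =>
    (LinearMap.mem_graph_iff θ _).mp (hθ ▸ mem_Γ i v) |>.symm⟩

/-- The module `M` is generated by a countable set. -/
def IsCountablyGenerated (R M : Type*) [Semiring R] [AddCommMonoid M] [Module R M] : Prop :=
  ∃ S : Set M, S.Countable ∧ Submodule.span R S = ⊤

theorem isCountablyGenerated_span {R M : Type*} [Semiring R] [AddCommMonoid M] [Module R M]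
    {S : Set M} (hS : S.Countable) : IsCountablyGenerated R (Submodule.span R S) :=
  ⟨_, hS.preimage Subtype.val_injective, Submodule.span_span_coe_preimage⟩

/-- A sequence of finite free modules over `M` in which each transition map dominates the map from
its source to `M`. The dual tower stabilizes in the sense of Mittag-Leffler, since each transition
map can be recovered from its composite with the next one. -/
structure StabilizingTower (R M : Type*) [CommRing R] [AddCommGroup M] [Module R M] where
  rank : ℕ → ℕ
  toModule : ∀ k, (Fin (rank k) →₀ R) →ₗ[R] M
  trans : ∀ k, (Fin (rank k) →₀ R) →ₗ[R] Fin (rank (k + 1)) →₀ R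
  toModule_comp_trans : ∀ k, toModule (k + 1) ∘ₗ trans k = toModule k
  dominates : ∀ k, Dominates (trans k) (toModule k)

namespace StabilizingTower

variable {R M : Type*} [CommRing R] [AddCommGroup M] [Module R M] (T : StabilizingTower R M)

/-- The submodule of `M` exhausted by the tower. -/
noncomputable def carrier : Submodule R M := ⨆ k, LinearMap.range (T.toModule k)

theorem monotone_range_toModule : Monotone fun k => LinearMap.range (T.toModule k) :=
  monotone_nat_of_le_succ fun k => T.toModule_comp_trans k ▸ LinearMap.range_comp_le_range _ _

theorem range_toModule_le_carrier (k : ℕ) : LinearMap.range (T.toModule k) ≤ T.carrier :=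
  le_iSup (fun k => LinearMap.range (T.toModule k)) k

theorem exists_le_range_toModule {N : Submodule R M} (hN : N.FG) (hle : N ≤ T.carrier) :
    ∃ k, N ≤ LinearMap.range (T.toModule k) := by
  simpa using (CompleteLattice.isCompactElement_iff_le_of_directed_sSup_le _ _).mp
    ((Submodule.fg_iff_compact N).mp hN) _ (Set.range_nonempty _)
    T.monotone_range_toModule.directed_le.directedOn_range hle

theorem isCountablyGenerated_carrier : IsCountablyGenerated R T.carrier := by
  have hspan : T.carrier = Submodule.span R
      (⋃ k, Set.range fun i => T.toModule k (Finsupp.single i 1)) := by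
    rw [Submodule.span_iUnion]
    refine iSup_congr fun k => ?_
    rw [Set.range_comp', ← Submodule.map_span, ← Finsupp.coe_basisSingleOne,
      Finsupp.basisSingleOne.span_eq, LinearMap.range_eq_map]
  rw [hspan]
  exact isCountablyGenerated_span (Set.countable_iUnion fun k => Set.countable_range _)

/-- The corestriction of `T.toModule k` to `T.carrier`. -/
noncomputable def toCarrier (k : ℕ) : (Fin (T.rank k) →₀ R) →ₗ[R] T.carrier :=
  (T.toModule k).codRestrict T.carrier fun v => T.range_toModule_le_carrier k ⟨v, rfl⟩

theorem toCarrier_comp_trans (k : ℕ) : T.toCarrier (k + 1) ∘ₗ T.trans k = T.toCarrier k :=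
  LinearMap.ext fun v => Subtype.ext (LinearMap.congr_fun (T.toModule_comp_trans k) v)

theorem exists_toCarrier_eq (x : T.carrier) : ∃ k, x ∈ LinearMap.range (T.toCarrier k) :=
  have ⟨k, v, hv⟩ := (Submodule.mem_iSup_of_directed _ T.monotone_range_toModule.directed_le).mp x.2
  ⟨k, v, Subtype.ext hv⟩

theorem ker_toCarrier_le [Module.Flat R M] (k : ℕ) :
    LinearMap.ker (T.toCarrier k) ≤ LinearMap.ker (T.trans k) :=
  (LinearMap.ker_codRestrict ..).trans_le (T.dominates k).ker_le_ker

theorem exists_comp_trans_comp_trans_eq (k : ℕ) :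
    ∃ c, c ∘ₗ T.trans (k + 1) ∘ₗ T.trans k = T.trans k :=
  T.dominates k _ (T.toModule (k + 2)) <| by
    rw [← LinearMap.comp_assoc, T.toModule_comp_trans, T.toModule_comp_trans]

section Lift

variable {X : Type*} [AddCommGroup X] [Module R X] {f : X →ₗ[R] T.carrier}

theorem exists_lift_toCarrier_succ (hf : Function.Surjective f) (k : ℕ)
    (h : (Fin (T.rank (k + 1)) →₀ R) →ₗ[R] X) (hfh : f ∘ₗ h = T.toCarrier (k + 1)) :
    ∃ h', f ∘ₗ h' = T.toCarrier (k + 2) ∧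
      h' ∘ₗ T.trans (k + 1) ∘ₗ T.trans k = h ∘ₗ T.trans k := by
  obtain ⟨c, hc⟩ := T.exists_comp_trans_comp_trans_eq k
  obtain ⟨l, hl⟩ := Module.projective_lifting_property f (T.toCarrier (k + 2)) hf
  -- The error `h - l ∘ T.trans (k + 1)` takes values in `ker f`, so adding it keeps `l` a lift.
  refine ⟨l + (h - l ∘ₗ T.trans (k + 1)) ∘ₗ c, ?_, ?_⟩
  · rw [LinearMap.comp_add, ← LinearMap.comp_assoc, LinearMap.comp_sub, ← LinearMap.comp_assoc,
      hl, hfh, T.toCarrier_comp_trans, sub_self, LinearMap.zero_comp, add_zero]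
  · rw [LinearMap.add_comp, LinearMap.comp_assoc, hc, LinearMap.sub_comp, LinearMap.comp_assoc]
    exact add_sub_cancel _ _

theorem exists_compatible_lifts (hf : Function.Surjective f) :
    ∃ σ : ∀ k, (Fin (T.rank k) →₀ R) →ₗ[R] X, (∀ k, f ∘ₗ σ k = T.toCarrier k) ∧
      (∀ k, σ (k + 1) ∘ₗ T.trans k = σ k) ∧
      ∀ k, LinearMap.ker (T.trans k) ≤ LinearMap.ker (σ k) := by
  choose next hnext hcompat using T.exists_lift_toCarrier_succ hf
  obtain ⟨h₀, hh₀⟩ := Module.projective_lifting_property f (T.toCarrier 1) hf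
  let h : ∀ k, {h // f ∘ₗ h = T.toCarrier (k + 1)} :=
    Nat.rec ⟨h₀, hh₀⟩ fun k h => ⟨next k h.1 h.2, hnext k h.1 h.2⟩
  refine ⟨fun k => (h k).1 ∘ₗ T.trans k, fun k => ?_, fun k => hcompat k (h k).1 (h k).2,
    fun k => LinearMap.ker_le_ker_comp _ _⟩
  rw [← LinearMap.comp_assoc, (h k).2, T.toCarrier_comp_trans]

end Lift

theorem projective_carrier [Module.Flat R M] : Module.Projective R T.carrier := by
  refine Module.Projective.of_lifting_property'' fun f hf => ?_
  obtain ⟨σ, hσ, hcompat, hker⟩ := T.exists_compatible_lifts hf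
  have hmono : Monotone fun k => LinearMap.range ((T.toCarrier k).prod (σ k)) :=
    monotone_nat_of_le_succ fun k => by
      rw [← T.toCarrier_comp_trans, ← hcompat]
      exact LinearMap.range_comp_le_range (T.trans k) ((T.toCarrier (k + 1)).prod (σ (k + 1)))
  obtain ⟨θ, hθ⟩ := exists_linearMap_comp_eq T.toCarrier σ hmono.directed_le
    (fun k => (T.ker_toCarrier_le k).trans (hker k)) T.exists_toCarrier_eq
  refine ⟨θ, LinearMap.ext fun x => ?_⟩
  obtain ⟨k, v, rfl⟩ := T.exists_toCarrier_eq x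
  rw [← LinearMap.comp_apply, LinearMap.comp_assoc, hθ, hσ, LinearMap.id_apply]

end StabilizingTower

theorem IsMittagLeffler.exists_stabilizingTower {R M : Type u} [CommRing R] [AddCommGroup M]
    [Module R M] [Module.Flat R M] (h : IsMittagLeffler R M) {N : Submodule R M} (hN : N.FG) :
    ∃ T : StabilizingTower R M, N ≤ T.carrier := by
  choose m a y hya hdom using fun x : Σ n, (Fin n →₀ R) →ₗ[R] M => h.exists_dominates x.2
  obtain ⟨n, v, rfl⟩ := Submodule.fg_iff_exists_fin_generating_family.mp hN
  let stage : ℕ → Σ n, (Fin n →₀ R) →ₗ[R] M :=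
    Nat.rec ⟨n, Finsupp.linearCombination R v⟩ fun _ x => ⟨m x, y x⟩
  let T : StabilizingTower R M :=
    { rank := fun k => (stage k).1
      toModule := fun k => (stage k).2
      trans := fun k => a (stage k)
      toModule_comp_trans := fun k => hya (stage k)
      dominates := fun k => hdom (stage k) }
  refine ⟨T, le_trans (Eq.le ?_) (T.range_toModule_le_carrier 0)⟩
  exact (Finsupp.range_linearCombination R).symm

section DirectSumOfFinite

variable {R : Type u} [Ring R]

theorem IsAdmissiblyIndProjective.of_linearEquiv {M N : Type u} [AddCommGroup M] [Module R M]
    [AddCommGroup N] [Module R N] (h : IsAdmissiblyIndProjective R M) (e : M ≃ₗ[R] N) :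
    IsAdmissiblyIndProjective R N := by
  obtain ⟨D⟩ := h
  refine ⟨{
    I := D.I
    ord := D.ord
    directed := D.directed
    P := fun i => (D.P i).map e.toLinearMap
    mono := fun i j hij => Submodule.map_mono (D.mono hij)
    covers := fun x => (D.covers (e.symm x)).imp fun _ hi => ⟨_, hi, e.apply_symm_apply x⟩
    fg := fun i => (D.fg i).map _
    proj := fun i =>
      have := D.proj i
      .of_equiv (e.submoduleMap (D.P i))
    splits := fun i j hij => ?_ }⟩
  obtain ⟨r, hr⟩ := D.splits i j hij
  refine ⟨e.submoduleMap (D.P i) ∘ₗ r ∘ₗ (e.submoduleMap (D.P j)).symm, fun v => ?_⟩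
  obtain ⟨v, rfl⟩ := (e.submoduleMap (D.P i)).surjective v
  calc e.submoduleMap (D.P i) (r ((e.submoduleMap (D.P j)).symm
        (e.submoduleMap (D.P j) (Submodule.inclusion (D.mono hij) v))))
    _ = e.submoduleMap (D.P i) v := by rw [LinearEquiv.symm_apply_apply, hr]

theorem isAdmissiblyIndProjective_directSum {ι : Type u} (Q : ι → Type u)
    [∀ i, AddCommGroup (Q i)] [∀ i, Module R (Q i)] [∀ i, Module.Finite R (Q i)]
    [Module.Projective R (⨁ i, Q i)] : IsAdmissiblyIndProjective R (⨁ i, Q i) := by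
  classical
  let P (s : Finset ι) : Submodule R (⨁ i, Q i) :=
    LinearMap.range (DFinsupp.lmk (R := R) (M := Q) s)
  have mem_P {s : Finset ι} {x : ⨁ i, Q i} : x ∈ P s ↔ ∀ i ∉ s, x i = 0 := by
    refine ⟨?_, fun hx => ⟨fun i => x i, DFinsupp.ext fun i => ?_⟩⟩
    · rintro ⟨f, rfl⟩ i hi
      exact dif_neg hi
    · by_cases hi : i ∈ s
      · exact dif_pos hi
      · exact (dif_neg hi).trans (hx i hi).symm
  let r (s : Finset ι) : (⨁ i, Q i) →ₗ[R] P s :=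
    (DFinsupp.filterLinearMap R Q (· ∈ s)).codRestrict (P s) fun x =>
      mem_P.mpr fun i hi => DFinsupp.filter_apply_neg _ hi
  have hr (s : Finset ι) : r s ∘ₗ (P s).subtype = LinearMap.id := by
    refine LinearMap.ext fun x => Subtype.ext (DFinsupp.ext fun i => ?_)
    by_cases hi : i ∈ s
    · exact DFinsupp.filter_apply_pos _ hi
    · exact (DFinsupp.filter_apply_neg _ hi).trans (mem_P.mp x.2 i hi).symm
  exact ⟨{
    I := Finset ι
    directed := inferInstance
    P := P
    mono := fun s t hst x hx => mem_P.mpr fun i hi => mem_P.mp hx i fun his => hi (hst his)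
    covers := fun x => ⟨DFinsupp.support x, mem_P.mpr fun i => DFinsupp.notMem_support_iff.mp⟩
    fg := fun s => Module.Finite.iff_fg.mp (Module.Finite.range _)
    proj := fun s => .of_split _ (r s) (hr s)
    splits := fun s t hst => ⟨r s ∘ₗ (P t).subtype, LinearMap.congr_fun (hr s)⟩ }⟩

theorem isAdmissiblyIndProjective_finsupp (κ : Type u) : IsAdmissiblyIndProjective R (κ →₀ R) := by
  classical
  exact (isAdmissiblyIndProjective_directSum fun _ => R).of_linearEquiv
    (finsuppLEquivDirectSum R R κ).symm

theorem exists_linearEquiv_prod_of_projective (M : Type u) [AddCommGroup M] [Module R M]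
    [Module.Projective R M] :
    ∃ N : Submodule R (M →₀ R), Nonempty ((M →₀ R) ≃ₗ[R] M × N) := by
  let p : (M →₀ R) →ₗ[R] M := Finsupp.linearCombination R id
  obtain ⟨s, hs⟩ := (Module.projective_def' (R := R) (P := M)).mp inferInstance
  have hexact : Function.Exact (LinearMap.ker p).subtype p := p.exact_subtype_ker_map
  obtain ⟨e, -⟩ := hexact.splitSurjectiveEquiv (Submodule.injective_subtype _) ⟨s, hs⟩
  exact ⟨LinearMap.ker p, ⟨e ≪≫ₗ LinearEquiv.prodComm R _ _⟩⟩

variable (R) in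
/-- The module `M` is isomorphic to a direct sum of finitely generated modules. -/
def IsDirectSumOfFinite (M : Type u) [AddCommGroup M] [Module R M] : Prop :=
  ∃ (ι : Type u) (Q : ι → ModuleCat.{u} R),
    (∀ i, Module.Finite R (Q i)) ∧ Nonempty (M ≃ₗ[R] ⨁ i, (Q i : Type u))

variable {M : Type u} [AddCommGroup M] [Module R M]

theorem IsDirectSumOfFinite.isAdmissiblyIndProjective [Module.Projective R M]
    (h : IsDirectSumOfFinite R M) : IsAdmissiblyIndProjective R M := by
  obtain ⟨ι, Q, hQ, ⟨φ⟩⟩ := h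
  have := Module.Projective.of_equiv φ
  exact (isAdmissiblyIndProjective_directSum fun i => (Q i : Type u)).of_linearEquiv φ.symm

theorem exists_disjoint_sup_eq_of_retraction {P P' : Submodule R M} (hle : P ≤ P') (hP' : P'.FG)
    (r : P' →ₗ[R] P) (hr : ∀ v, r (Submodule.inclusion hle v) = v) :
    ∃ C : Submodule R M, C.FG ∧ Disjoint P C ∧ P ⊔ C = P' := by
  have := Module.Finite.of_fg hP'
  let E : P' →ₗ[R] M := P'.subtype - P.subtype ∘ₗ r
  refine ⟨LinearMap.range E, Module.Finite.iff_fg.mp (Module.Finite.range E), ?_, ?_⟩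
  · refine Submodule.disjoint_def.mpr fun x hx hxE => ?_
    obtain ⟨v, rfl⟩ := hxE
    have hv : v = Submodule.inclusion hle (⟨E v, hx⟩ + r v) :=
      Subtype.ext (sub_add_cancel (v : M) (r v)).symm
    have hrv := congrArg r hv
    rw [hr, right_eq_add] at hrv
    exact congrArg Subtype.val hrv
  · refine le_antisymm (sup_le hle ?_) fun x hx => ?_
    · rintro _ ⟨v, rfl⟩
      exact P'.sub_mem v.2 (hle (r v).2)
    · exact Submodule.mem_sup.mpr
        ⟨_, (r ⟨x, hx⟩).2, _, ⟨⟨x, hx⟩, rfl⟩, add_sub_cancel (r ⟨x, hx⟩ : M) x⟩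

theorem iSupIndep_of_disjoint_of_sup_eq {α : Type*} [CompleteLattice α] [IsModularLattice α]
    [IsCompactlyGenerated α] {P C : ℕ → α} (h₀ : P 0 = ⊥) (hdisj : ∀ k, Disjoint (P k) (C k))
    (hsup : ∀ k, P k ⊔ C k = P (k + 1)) : iSupIndep C ∧ ⨆ k, C k = ⨆ k, P k := by
  have sup_range (n : ℕ) : (Finset.range n).sup C = P n := by
    induction n with
    | zero => exact h₀.symm
    | succ n ih => rw [Finset.range_add_one, Finset.sup_insert, ih, sup_comm, hsup]
  have supIndep_range (n : ℕ) : (Finset.range n).SupIndep C := by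
    induction n with
    | zero => exact Finset.supIndep_empty C
    | succ n ih =>
      rw [Finset.range_add_one]
      exact ih.insert (by rw [sup_range]; exact (hdisj n).symm)
  refine ⟨iSupIndep_iff_supIndep.mpr fun s => ?_, ?_⟩
  · obtain ⟨n, hn⟩ := s.exists_nat_subset_range
    exact (supIndep_range n).subset hn
  · refine le_antisymm (iSup_le fun k => ?_) (iSup_le fun k => ?_)
    · exact (le_sup_right.trans (hsup k).le).trans (le_iSup P (k + 1))
    · exact (sup_range k).symm.trans_le (Finset.sup_le fun i _ => le_iSup C i)

theorem AdmissibleIndPresentation.exists_monotone_nat_iSup_eq_top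
    (D : AdmissibleIndPresentation R M) (hM : IsCountablyGenerated R M) :
    ∃ idx : ℕ → D.I, Monotone idx ∧ ⨆ k, D.P (idx k) = ⊤ := by
  obtain ⟨S, hS, hspan⟩ := hM
  obtain ⟨x, hx⟩ := (hS.insert 0).exists_eq_range (Set.insert_nonempty 0 S)
  choose next hle hmem using fun (k : ℕ) (i : D.I) =>
    D.exists_ge_of_fg i (Submodule.fg_span_singleton (x k))
  obtain ⟨i₀, -⟩ := D.covers 0
  let idx : ℕ → D.I := Nat.rec i₀ next
  refine ⟨idx, monotone_nat_of_le_succ fun k => hle k (idx k), ?_⟩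
  rw [eq_top_iff, ← hspan, Submodule.span_le]
  intro s hs
  obtain ⟨k, rfl⟩ : s ∈ Set.range x := hx ▸ Set.mem_insert_of_mem 0 hs
  exact le_iSup (fun k => D.P (idx k)) (k + 1)
    (hmem k (idx k) (Submodule.mem_span_singleton_self (x k)))

theorem IsAdmissiblyIndProjective.isDirectSumOfFinite (h : IsAdmissiblyIndProjective R M)
    (hM : IsCountablyGenerated R M) : IsDirectSumOfFinite R M := by
  obtain ⟨D⟩ := h
  obtain ⟨idx, hidx, htop⟩ := D.exists_monotone_nat_iSup_eq_top hM
  let P : ℕ → Submodule R M := Nat.rec ⊥ fun k _ => D.P (idx k)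
  have exists_complement (k : ℕ) : ∃ C : Submodule R M, C.FG ∧ Disjoint (P k) C ∧
      P k ⊔ C = P (k + 1) := by
    rcases k with _ | k
    · exact ⟨_, D.fg (idx 0), disjoint_bot_left, bot_sup_eq _⟩
    · obtain ⟨r, hr⟩ := D.splits _ _ (hidx k.le_succ)
      exact exists_disjoint_sup_eq_of_retraction _ (D.fg _) r hr
  choose C hfg hdisj hsup using exists_complement
  obtain ⟨hindep, hiSup⟩ := iSupIndep_of_disjoint_of_sup_eq rfl hdisj hsup
  have hCtop : ⨆ k, C k = ⊤ := by
    rw [hiSup, eq_top_iff, ← htop]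
    exact iSup_le fun k => le_iSup P (k + 1)
  have hinternal : DirectSum.IsInternal fun i : ULift.{u} ℕ => C i.down :=
    DirectSum.isInternal_submodule_of_iSupIndep_of_iSup_eq_top (hindep.comp ULift.down_injective)
      ((Equiv.ulift.iSup_comp (g := C)).trans hCtop)
  exact ⟨ULift.{u} ℕ, fun i => ModuleCat.of R (C i.down), fun i => Module.Finite.of_fg (hfg _),
    ⟨(LinearEquiv.ofBijective (DirectSum.coeLinearMap fun i : ULift.{u} ℕ => C i.down)
      hinternal).symm⟩⟩

end DirectSumOfFinite

section AdmissibleSubmodule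

variable {R : Type u} [CommRing R] {M : Type u} [AddCommGroup M] [Module R M]

/-- A finitely generated projective submodule `P` of `M` such that every factorization of `P ⊆ M`
through a finite free module starts with a split injection. In particular `P` is a direct summand
of every finitely generated projective submodule containing it. -/
structure IsAdmissibleSubmodule (P : Submodule R M) : Prop where
  fg : P.FG
  projective : Module.Projective R P
  dominates : Dominates (LinearMap.id : P →ₗ[R] P) P.subtype

theorem IsAdmissibleSubmodule.exists_retraction {P P' : Submodule R M}
    (hP : IsAdmissibleSubmodule P) (hfg : P'.FG) [Module.Projective R P'] (hle : P ≤ P') :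
    ∃ r : P' →ₗ[R] P, ∀ v, r (Submodule.inclusion hle v) = v :=
  have := Module.Finite.of_fg hfg
  have ⟨r, hr⟩ := hP.dominates.exists_comp_eq (Submodule.inclusion hle) P'.subtype rfl
  ⟨r, LinearMap.congr_fun hr⟩

theorem IsAdmissiblyIndProjective.of_forall_fg_le_isAdmissibleSubmodule
    (h : ∀ N : Submodule R M, N.FG → ∃ P, N ≤ P ∧ IsAdmissibleSubmodule P) :
    IsAdmissiblyIndProjective R M :=
  ⟨{ I := {P : Submodule R M // IsAdmissibleSubmodule P}
     ord := inferInstance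
     directed := ⟨fun P P' =>
       have ⟨Q, hle, hQ⟩ := h (P.1 ⊔ P'.1) (P.2.fg.sup P'.2.fg)
       ⟨⟨Q, hQ⟩, sup_le_iff.mp hle⟩⟩
     P := Subtype.val
     mono := Subtype.mono_coe _
     covers := fun x =>
       have ⟨Q, hle, hQ⟩ := h (Submodule.span R {x}) (Submodule.fg_span_singleton x)
       ⟨⟨Q, hQ⟩, hle (Submodule.mem_span_singleton_self x)⟩
     fg := fun P => P.2.fg
     proj := fun P => P.2.projective
     splits := fun P P' hle =>
       have := P'.2.projective
       P.2.exists_retraction P'.2.fg hle }⟩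

theorem StabilizingTower.isAdmissibleSubmodule_map_subtype [Module.Flat R M]
    (T : StabilizingTower R M) (D : AdmissibleIndPresentation R T.carrier) (i : D.I) :
    IsAdmissibleSubmodule ((D.P i).map T.carrier.subtype) := by
  let P := (D.P i).map T.carrier.subtype
  let e : D.P i ≃ₗ[R] P := Submodule.equivSubtypeMap T.carrier (D.P i)
  have hfg : P.FG := (D.fg i).map _
  have := Module.Finite.of_fg hfg
  have := D.proj i
  have hproj : Module.Projective R P := .of_equiv e
  refine ⟨hfg, hproj, ?_⟩
  obtain ⟨k, hk⟩ := T.exists_le_range_toModule hfg (Submodule.map_subtype_le _ _)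
  obtain ⟨s, hs⟩ := Module.projective_lifting_property (T.toModule k).rangeRestrict
    (Submodule.inclusion hk) (LinearMap.surjective_rangeRestrict _)
  have toModule_comp : T.toModule k ∘ₗ s = P.subtype :=
    LinearMap.ext fun v => congrArg Subtype.val (LinearMap.congr_fun hs v)
  have toCarrier_trans (v : P) : T.toCarrier (k + 1) (T.trans k (s v)) = e.symm v := by
    rw [← LinearMap.comp_apply, T.toCarrier_comp_trans]
    refine Subtype.ext ((LinearMap.congr_fun toModule_comp v).trans ?_)
    exact congrArg Subtype.val (e.apply_symm_apply v).symm
  obtain ⟨j, hij, hj⟩ := D.exists_ge_of_fg i (N := LinearMap.range (T.toCarrier (k + 1)))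
    (Module.Finite.iff_fg.mp (Module.Finite.range _))
  obtain ⟨r, hr⟩ := D.splits i j hij
  let q : (Fin (T.rank (k + 1)) →₀ R) →ₗ[R] P :=
    e.toLinearMap ∘ₗ r ∘ₗ Submodule.inclusion hj ∘ₗ (T.toCarrier (k + 1)).rangeRestrict
  have hq : q ∘ₗ T.trans k ∘ₗ s = LinearMap.id := by
    refine LinearMap.ext fun v => ?_
    have hincl : Submodule.inclusion hj ((T.toCarrier (k + 1)).rangeRestrict (T.trans k (s v))) =
        Submodule.inclusion (D.mono hij) (e.symm v) := Subtype.ext (toCarrier_trans v)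
    simp [q, hincl, hr]
  rw [← hq, ← toModule_comp]
  exact ((T.dominates k).comp_right s).comp_left q

theorem IsMittagLeffler.exists_isAdmissibleSubmodule [Module.Flat R M] (h : IsMittagLeffler R M)
    (hcg : ∀ N : Submodule R M, IsCountablyGenerated R N → Module.Projective R N →
      IsAdmissiblyIndProjective R N) {N : Submodule R M} (hN : N.FG) :
    ∃ P, N ≤ P ∧ IsAdmissibleSubmodule P := by
  obtain ⟨T, hT⟩ := h.exists_stabilizingTower hN
  obtain ⟨D⟩ := hcg T.carrier T.isCountablyGenerated_carrier T.projective_carrier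
  have hcomap : (N.comap T.carrier.subtype).FG :=
    Submodule.fg_of_fg_map_injective _ (Submodule.injective_subtype _) <| by
      rwa [Submodule.map_comap_subtype, inf_eq_right.mpr hT]
  obtain ⟨i, hi⟩ := D.exists_le_of_fg hcomap
  refine ⟨_, fun x hx => ?_, T.isAdmissibleSubmodule_map_subtype D i⟩
  exact ⟨⟨x, hT hx⟩, hi hx, rfl⟩

theorem IsFlatMittagLeffler.isAdmissiblyIndProjective (h : IsFlatMittagLeffler R M)
    (hcg : ∀ N : Submodule R M, IsCountablyGenerated R N → Module.Projective R N →
      IsAdmissiblyIndProjective R N) : IsAdmissiblyIndProjective R M :=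
  have := h.1
  .of_forall_fg_le_isAdmissibleSubmodule fun _ hN => h.2.exists_isAdmissibleSubmodule hcg hN

end AdmissibleSubmodule

/-- **Lemma B.1(3)**: for a commutative ring `R`, the following are equivalent:
(a) every flat Mittag-Leffler `R`-module is admissibly Ind-projective;
(b) every countably generated projective `R`-module is isomorphic to a direct sum of
finitely generated `R`-modules;
(c) the class of admissibly Ind-projective `R`-modules is closed under direct summands. -/
theorem flatMittagLeffler_eq_indProjective_iff_projectives_decompose
    (R : Type u) [CommRing R] :
    ((∀ (M : Type u) [AddCommGroup M] [Module R M],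
        IsFlatMittagLeffler R M → IsAdmissiblyIndProjective R M) ↔
      (∀ (M : Type u) [AddCommGroup M] [Module R M],
        (∃ S : Set M, S.Countable ∧ Submodule.span R S = ⊤) → Module.Projective R M →
        ∃ (ι : Type u) (Q : ι → ModuleCat.{u} R),
          (∀ i, Module.Finite R (Q i)) ∧ Nonempty (M ≃ₗ[R] ⨁ i, (Q i : Type u)))) ∧
    ((∀ (M : Type u) [AddCommGroup M] [Module R M],
        (∃ S : Set M, S.Countable ∧ Submodule.span R S = ⊤) → Module.Projective R M →
        ∃ (ι : Type u) (Q : ι → ModuleCat.{u} R),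
          (∀ i, Module.Finite R (Q i)) ∧ Nonempty (M ≃ₗ[R] ⨁ i, (Q i : Type u))) ↔
      (∀ (M N : Type u) [AddCommGroup M] [Module R M] [AddCommGroup N] [Module R N],
        IsAdmissiblyIndProjective R (M × N) → IsAdmissiblyIndProjective R M)) := by
  have flatMittagLeffler_of_decompose (hb : ∀ (M : Type u) [AddCommGroup M] [Module R M],
      IsCountablyGenerated R M → Module.Projective R M → IsDirectSumOfFinite R M)
      (M : Type u) [AddCommGroup M] [Module R M] (hM : IsFlatMittagLeffler R M) :
      IsAdmissiblyIndProjective R M :=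
    hM.isAdmissiblyIndProjective fun N hN _ => (hb N hN inferInstance).isAdmissiblyIndProjective
  refine ⟨⟨fun ha M _ _ hM _ => ?_, flatMittagLeffler_of_decompose⟩,
    ⟨fun hb M N _ _ _ _ hMN => ?_, fun hc M _ _ hM _ => ?_⟩⟩
  · have hML : IsFlatMittagLeffler R M := ⟨inferInstance, .of_projective⟩
    exact (ha M hML).isDirectSumOfFinite hM
  · exact flatMittagLeffler_of_decompose hb M <| hMN.isFlatMittagLeffler.of_comp_eq_id
      (LinearMap.inl R M N) (LinearMap.fst R M N) (LinearMap.fst_comp_inl R M N)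
  · obtain ⟨N, ⟨e⟩⟩ := exists_linearEquiv_prod_of_projective (R := R) M
    have hMN : IsAdmissiblyIndProjective R (M × N) :=
      (isAdmissiblyIndProjective_finsupp M).of_linearEquiv e
    exact (hc M N hMN).isDirectSumOfFinite hM
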